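/- For z ∈ (−∞,1) with z ≠ 0 and Re a > 0, Re(c−a) > 0, the sequence f(m) := ∫₀¹ (x(1−x)/(1−zx))^m x^{a−1}(1−x)^{c−a−1}(1−zx)^{−b} dx satisfies f(m) ~ √(2π/m) · (√(1−z))^{c−a−b−1}/((1+√(1−z))^{c−2}) · (√(1−z)/2)^{1/2} · (1+√(1−z)) · (1+√(1−z))^{−2m} as m → ∞; equivalently f(m)·(1+√(1−z))^{2m} · m^{1/2} converges to √(2π)·u(x₀)/√(φ″(x₀)) where x₀ = 1/(1+√(1−z)), u(x)=x^{a−1}(1−x)^{c−a−1}(1−zx)^{−b}, and φ(x) = −log(x(1−x)/(1−zx)). -/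

import Mathlib

open Real Filter Set

/-!
This is Laplace's method. Multiplied by `(1 + s) ^ 2`, where `s = √(1 - z)`, the base
`x (1 - x) / (1 - z x)` becomes `1 - (1 + s) ^ 2 / (1 - z x) * (x - x₀) ^ 2` with
`x₀ = 1 / (1 + s)`: it peaks at `x₀` with value `1` and curvature constant `(1 + s) ^ 2 / s`,
and is less than `1` in absolute value elsewhere on `[0, 1]`. Away from `x₀` its powers decay
geometrically. Near `x₀` substitute `x = x₀ + t / √m`; the `m`-th power then tends to a Gaussian
in `t` and is dominated by a wider one, so that dominated convergence gives the limit.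
-/

section LaplaceMethod

open MeasureTheory Asymptotics
open scoped Topology

/-- The second-order Peano expansion `g x = 1 - a (x - x₀) ^ 2 + o((x - x₀) ^ 2)` at `x₀`, the local
hypothesis of Laplace's method; for `g = exp (-φ)` with `φ x₀ = φ' x₀ = 0` the constant `a` is
`φ'' x₀ / 2`. Positivity of `a`, which makes `x₀` a strict local maximum, is not part of the
definition. -/
def HasQuadraticPeak (g : ℝ → ℝ) (x₀ a : ℝ) : Prop :=
  (fun x ↦ g x - (1 - a * (x - x₀) ^ 2)) =o[𝓝 x₀] fun x ↦ (x - x₀) ^ 2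

variable {E : Type*} [NormedAddCommGroup E] [NormedSpace ℝ E]

lemma tendsto_add_div_sqrt_natCast (x₀ t : ℝ) :
    Tendsto (fun m : ℕ ↦ x₀ + t / √m) atTop (𝓝 x₀) := by
  simpa using ((tendsto_sqrt_atTop.comp tendsto_natCast_atTop_atTop).const_div_atTop t).const_add x₀

lemma sqrt_natCast_le_self (m : ℕ) : √(m : ℝ) ≤ m :=
  sqrt_le_iff.2 ⟨m.cast_nonneg, mod_cast Nat.le_self_pow two_ne_zero m⟩

lemma integral_comp_add_div (F : ℝ → E) (x₀ c : ℝ) :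
    ∫ t, F (x₀ + t / c) = |c| • ∫ x, F x := by
  rw [Measure.integral_comp_div (fun y ↦ F (x₀ + y)), integral_add_left_eq_self]

section MeasureSpace

variable {X : Type*} [MeasurableSpace X] {μ : Measure X} {g : X → ℝ} {u : X → E} {s : Set X} {r : ℝ}

lemma integrableOn_pow_smul (hs : MeasurableSet s)
    (hgm : AEStronglyMeasurable g (μ.restrict s)) (hg : ∀ x ∈ s, |g x| ≤ 1)
    (hu : IntegrableOn u s μ) (m : ℕ) : IntegrableOn (fun x ↦ g x ^ m • u x) s μ := by
  refine hu.bdd_smul 1 (hgm.pow m) (ae_restrict_of_forall_mem hs fun x hx ↦ ?_)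
  rw [norm_pow, norm_eq_abs]
  exact pow_le_one₀ (abs_nonneg _) (hg x hx)

lemma tendsto_sqrt_smul_setIntegral_of_abs_le (hs : MeasurableSet s) (hr₀ : 0 ≤ r) (hr₁ : r < 1)
    (hg : ∀ x ∈ s, |g x| ≤ r) (hu : IntegrableOn u s μ) :
    Tendsto (fun m : ℕ ↦ √m • ∫ x in s, g x ^ m • u x ∂μ) atTop (𝓝 0) := by
  have hint (m : ℕ) : ‖∫ x in s, g x ^ m • u x ∂μ‖ ≤ r ^ m * ∫ x in s, ‖u x‖ ∂μ := by
    rw [← integral_const_mul]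
    refine norm_integral_le_of_norm_le (hu.norm.const_mul _)
      (ae_restrict_of_forall_mem hs fun x hx ↦ ?_)
    rw [norm_smul, norm_pow, norm_eq_abs]
    gcongr
    exact hg x hx
  have hlim := (tendsto_self_mul_const_pow_of_lt_one hr₀ hr₁).mul_const (∫ x in s, ‖u x‖ ∂μ)
  rw [zero_mul] at hlim
  refine squeeze_zero_norm (fun m ↦ ?_) hlim
  rw [norm_smul, norm_of_nonneg (sqrt_nonneg _), mul_assoc]
  exact mul_le_mul (sqrt_natCast_le_self m) (hint m) (norm_nonneg _) m.cast_nonneg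

end MeasureSpace

lemma exists_abs_le_of_isCompact {X : Type*} [TopologicalSpace X] {K U : Set X} {f : X → ℝ}
    {x₀ : X} (hK : IsCompact K) (hf : ContinuousOn f K) (hlt : ∀ x ∈ K, x ≠ x₀ → |f x| < 1)
    (hU : U ∈ 𝓝 x₀) : ∃ r ∈ Ico (0 : ℝ) 1, ∀ x ∈ K \ U, |f x| ≤ r := by
  obtain ⟨V, hVU, hV, hxV⟩ := mem_nhds_iff.1 hU
  have hKV : IsCompact (K \ V) := hK.diff hV
  obtain hempty | hne := (K \ V).eq_empty_or_nonempty
  · exact ⟨0, by simp, fun x hx ↦ absurd hempty (Nonempty.ne_empty ⟨x, hx.1, fun h ↦ hx.2 (hVU h)⟩)⟩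
  · obtain ⟨y, hy, hmax⟩ := hKV.exists_isMaxOn hne (hf.mono sdiff_subset).abs
    have hyx : y ≠ x₀ := fun h ↦ hy.2 (h ▸ hxV)
    exact ⟨|f y|, ⟨abs_nonneg _, hlt y hy.1 hyx⟩, fun x hx ↦ hmax ⟨hx.1, fun h ↦ hx.2 (hVU h)⟩⟩

lemma abs_pow_le_exp_neg_mul_sq {κ y t : ℝ} {m : ℕ} (hm : 0 < m)
    (hy : |y| ≤ exp (-κ * (t / √m) ^ 2)) : |y ^ m| ≤ exp (-κ * t ^ 2) := by
  have hm' : (0 : ℝ) < m := mod_cast hm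
  calc |y ^ m| ≤ exp (-κ * (t / √m) ^ 2) ^ m := by
        rw [abs_pow]; exact pow_le_pow_left₀ (abs_nonneg _) hy m
    _ = exp (-κ * t ^ 2) := by
        rw [← exp_nat_mul, div_pow, sq_sqrt hm'.le]
        congr 1
        field_simp

namespace HasQuadraticPeak

variable {g h : ℝ → ℝ} {u : ℝ → E} {s U : Set ℝ} {x₀ a κ C α β : ℝ}

lemma of_eventuallyEq (hg : g =ᶠ[𝓝 x₀] fun x ↦ 1 - h x * (x - x₀) ^ 2) (hh : ContinuousAt h x₀) :
    HasQuadraticPeak g x₀ (h x₀) := by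
  have hsub : (fun x ↦ h x₀ - h x) =o[𝓝 x₀] fun _ ↦ (1 : ℝ) :=
    (isLittleO_one_iff ℝ).2 (by simpa using hh.tendsto.const_sub (h x₀))
  refine (hsub.mul_isBigO (isBigO_refl (fun x ↦ (x - x₀) ^ 2) _)).congr' ?_ (by simp)
  filter_upwards [hg] with x hx
  rw [hx]
  ring

lemma eventually_abs_le_exp (hg : HasQuadraticPeak g x₀ a) (hκ : κ < a) :
    ∀ᶠ x in 𝓝 x₀, |g x| ≤ exp (-κ * (x - x₀) ^ 2) := by
  have hsmall : ∀ᶠ x in 𝓝 x₀, (2 * a - κ) * (x - x₀) ^ 2 < 1 :=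
    ContinuousAt.eventually_lt (by fun_prop) continuousAt_const (by simp)
  filter_upwards [hg.bound (sub_pos.2 hκ), hsmall] with x hx hx_small
  rw [norm_eq_abs, norm_of_nonneg (sq_nonneg _), abs_le] at hx
  have hg_pos : 0 < g x := by linarith
  calc |g x| = g x := abs_of_pos hg_pos
    _ ≤ -κ * (x - x₀) ^ 2 + 1 := by linarith
    _ ≤ exp (-κ * (x - x₀) ^ 2) := add_one_le_exp _

lemma tendsto_pow_add_div_sqrt (hg : HasQuadraticPeak g x₀ a) (t : ℝ) :
    Tendsto (fun m : ℕ ↦ g (x₀ + t / √m) ^ m) atTop (𝓝 (exp (-a * t ^ 2))) := by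
  have hscale : ∀ᶠ m : ℕ in atTop, (m : ℝ) * (x₀ + t / √m - x₀) ^ 2 = t ^ 2 := by
    filter_upwards [eventually_gt_atTop 0] with m hm
    rw [add_sub_cancel_left, div_pow, sq_sqrt m.cast_nonneg]
    field_simp
  have hrem : Tendsto (fun m : ℕ ↦ (m : ℝ) *
      (g (x₀ + t / √m) - (1 - a * (x₀ + t / √m - x₀) ^ 2))) atTop (𝓝 0) := by
    have hlittle := hg.comp_tendsto (tendsto_add_div_sqrt_natCast x₀ t)
    refine (isLittleO_one_iff ℝ).1 (((isBigO_refl (fun m : ℕ ↦ (m : ℝ)) atTop).mul_isLittleO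
      hlittle).trans_isBigO ?_)
    exact (isBigO_const_const (t ^ 2) one_ne_zero atTop).congr' (hscale.mono fun _ ↦ Eq.symm) .rfl
  have hlin : Tendsto (fun m : ℕ ↦ (m : ℝ) * (g (x₀ + t / √m) - 1)) atTop (𝓝 (-a * t ^ 2)) := by
    rw [← zero_add (-a * t ^ 2)]
    refine (hrem.add_const _).congr' ?_
    filter_upwards [hscale] with m hm
    rw [← hm]
    ring
  simpa using tendsto_one_add_pow_exp_of_tendsto hlin

variable [CompleteSpace E]

lemma tendsto_sqrt_smul_setIntegral_of_abs_le_exp (hg : HasQuadraticPeak g x₀ a) (hκ : 0 < κ)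
    (hU : U ∈ 𝓝 x₀) (hUm : MeasurableSet U) (hgU : ∀ x ∈ U, |g x| ≤ exp (-κ * (x - x₀) ^ 2))
    (huU : ∀ x ∈ U, ‖u x‖ ≤ C) (hint : ∀ m : ℕ, IntegrableOn (fun x ↦ g x ^ m • u x) U)
    (hu : ContinuousAt u x₀) :
    Tendsto (fun m : ℕ ↦ √m • ∫ x in U, g x ^ m • u x) atTop (𝓝 (√(π / a) • u x₀)) := by
  let F (m : ℕ) : ℝ → E := U.indicator fun x ↦ g x ^ m • u x
  have hC : 0 ≤ C := (norm_nonneg _).trans (huU x₀ (mem_of_mem_nhds hU))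
  have hrescale (m : ℕ) : √m • ∫ x in U, g x ^ m • u x = ∫ t, F m (x₀ + t / √m) := by
    rw [integral_comp_add_div, integral_indicator hUm, abs_of_nonneg (sqrt_nonneg _)]
  have hgauss : ∫ t, exp (-a * t ^ 2) • u x₀ = √(π / a) • u x₀ := by
    rw [integral_smul_const, integral_gaussian]
  simp_rw [hrescale, ← hgauss]
  refine tendsto_integral_filter_of_dominated_convergence (fun t ↦ exp (-κ * t ^ 2) * C) ?_ ?_
    ((integrable_exp_neg_mul_sq hκ).mul_const C) (ae_of_all _ fun t ↦ ?_)
  · filter_upwards [eventually_gt_atTop 0] with m hm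
    have hm' : √(m : ℝ) ≠ 0 := (sqrt_pos.2 (mod_cast hm)).ne'
    have hF := (integrable_indicator_iff hUm).2 (hint m)
    exact ((hF.comp_add_left x₀).comp_div hm').aestronglyMeasurable
  · filter_upwards [eventually_gt_atTop 0] with m hm
    refine ae_of_all _ fun t ↦ ?_
    by_cases hx : x₀ + t / √m ∈ U
    · simp only [F, indicator_of_mem hx, norm_smul, norm_eq_abs]
      exact mul_le_mul (abs_pow_le_exp_neg_mul_sq hm (by simpa using hgU _ hx)) (huU _ hx)
        (norm_nonneg _) (exp_nonneg _)
    · simp only [F, indicator_of_notMem hx, norm_zero]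
      positivity
  · have hx := tendsto_add_div_sqrt_natCast x₀ t
    refine ((hg.tendsto_pow_add_div_sqrt t).smul (hu.tendsto.comp hx)).congr' ?_
    filter_upwards [hx.eventually hU] with m hm
    simp only [F, Function.comp_apply, indicator_of_mem hm]

theorem tendsto_sqrt_smul_setIntegral (hg : HasQuadraticPeak g x₀ a) (ha : 0 < a)
    (hs : MeasurableSet s) (hsx : s ∈ 𝓝 x₀) (hgm : AEStronglyMeasurable g (volume.restrict s))
    (hsep : ∀ U ∈ 𝓝 x₀, ∃ r ∈ Ico (0 : ℝ) 1, ∀ x ∈ s \ U, |g x| ≤ r)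
    (hu : IntegrableOn u s) (hux : ContinuousAt u x₀) :
    Tendsto (fun m : ℕ ↦ √m • ∫ x in s, g x ^ m • u x) atTop (𝓝 (√(π / a) • u x₀)) := by
  have hnear : ∀ᶠ x in 𝓝 x₀, x ∈ s ∧ |g x| ≤ exp (-(a / 2) * (x - x₀) ^ 2) ∧ ‖u x‖ ≤ ‖u x₀‖ + 1 :=
    Eventually.and hsx ((hg.eventually_abs_le_exp (half_lt_self ha)).and
      ((hux.norm.eventually_lt continuousAt_const (lt_add_one _)).mono fun _ ↦ le_of_lt))
  obtain ⟨U, hU, hUopen, hxU⟩ := eventually_nhds_iff.1 hnear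
  have hUx : U ∈ 𝓝 x₀ := hUopen.mem_nhds hxU
  have hUs : U ⊆ s := fun x hx ↦ (hU x hx).1
  obtain ⟨r, ⟨hr₀, hr₁⟩, hr⟩ := hsep U hUx
  have hg_le_one : ∀ x ∈ s, |g x| ≤ 1 := fun x hx ↦ by
    by_cases hxU : x ∈ U
    · refine (hU x hxU).2.1.trans (exp_le_one_iff.2 ?_)
      nlinarith [sq_nonneg (x - x₀)]
    · exact (hr x ⟨hx, hxU⟩).trans hr₁.le
  have hint := integrableOn_pow_smul hs hgm hg_le_one hu
  have hpeak := hg.tendsto_sqrt_smul_setIntegral_of_abs_le_exp (half_pos ha) hUx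
    hUopen.measurableSet (fun x hx ↦ (hU x hx).2.1) (fun x hx ↦ (hU x hx).2.2)
    (fun m ↦ (hint m).mono_set hUs) hux
  have htail := tendsto_sqrt_smul_setIntegral_of_abs_le (hs.diff hUopen.measurableSet) hr₀ hr₁ hr
    (hu.mono_set sdiff_subset)
  rw [← add_zero (√(π / a) • u x₀)]
  refine (hpeak.add htail).congr fun m ↦ ?_
  rw [← smul_add, setIntegral_sdiff hUopen.measurableSet (hint m) hUs, add_sub_cancel]

theorem tendsto_sqrt_smul_intervalIntegral (hg : HasQuadraticPeak g x₀ a) (ha : 0 < a)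
    (hx₀ : x₀ ∈ Ioo α β) (hgc : ContinuousOn g (Icc α β))
    (hlt : ∀ x ∈ Icc α β, x ≠ x₀ → |g x| < 1)
    (hu : IntervalIntegrable u volume α β) (hux : ContinuousAt u x₀) :
    Tendsto (fun m : ℕ ↦ √m • ∫ x in α..β, g x ^ m • u x) atTop (𝓝 (√(π / a) • u x₀)) := by
  have hαβ : α ≤ β := (hx₀.1.trans hx₀.2).le
  simp_rw [intervalIntegral.integral_of_le hαβ, ← integral_Icc_eq_integral_Ioc]
  exact hg.tendsto_sqrt_smul_setIntegral ha measurableSet_Icc (Icc_mem_nhds hx₀.1 hx₀.2)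
    (hgc.aestronglyMeasurable measurableSet_Icc)
    (fun _ ↦ exists_abs_le_of_isCompact isCompact_Icc hgc hlt)
    ((intervalIntegrable_iff_integrableOn_Icc_of_le hαβ).1 hu) hux

end HasQuadraticPeak

end LaplaceMethod

section EulerIntegral

open MeasureTheory

/-- The base `Φ x = x (1 - x) / (1 - z x)` whose `m`-th power enters the Euler-type integral. -/
noncomputable def eulerBase (z x : ℝ) : ℝ :=
  x * (1 - x) / (1 - z * x)

/-- The amplitude `u x = x ^ (a - 1) * (1 - x) ^ (c - a - 1) * (1 - z x) ^ (-b)` of the Euler-type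
integral, with principal-branch powers of the real numbers `x`, `1 - x` and `1 - z x`, all positive
on `(0, 1)`. -/
noncomputable def eulerAmplitude (z : ℝ) (a b c : ℂ) (x : ℝ) : ℂ :=
  (x : ℂ) ^ (a - 1) * ((1 - x : ℝ) : ℂ) ^ (c - a - 1) * ((1 - z * x : ℝ) : ℂ) ^ (-b)

/-- The maximizer `x₀ = 1 / (1 + √(1 - z))` of `eulerBase z` on `(0, 1)`. -/
noncomputable def eulerSaddle (z : ℝ) : ℝ :=
  1 / (1 + √(1 - z))

variable {z x : ℝ} {a b c : ℂ}

lemma one_sub_mul_pos (hz : z < 1) (hx : x ∈ Icc (0 : ℝ) 1) : 0 < 1 - z * x := by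
  obtain rfl | hx₀ := hx.1.eq_or_lt
  · simp
  · nlinarith [mul_pos hx₀ (sub_pos.2 hz), hx.2]

lemma eulerSaddle_mem_Ioo (hz : z < 1) : eulerSaddle z ∈ Ioo 0 1 := by
  have hs : 0 < √(1 - z) := sqrt_pos.2 (sub_pos.2 hz)
  exact ⟨by unfold eulerSaddle; positivity, (div_lt_one (by positivity)).2 (by linarith)⟩

lemma one_sub_eulerSaddle (z : ℝ) : 1 - eulerSaddle z = √(1 - z) * (1 + √(1 - z))⁻¹ := by
  unfold eulerSaddle
  field_simp
  ring

lemma one_sub_mul_eulerSaddle (hz : z ≤ 1) : 1 - z * eulerSaddle z = √(1 - z) := by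
  have hsq : √(1 - z) ^ 2 = 1 - z := sq_sqrt (sub_nonneg.2 hz)
  unfold eulerSaddle
  field_simp
  linarith

lemma sq_mul_eulerBase (hz : z ≤ 1) (hx : 1 - z * x ≠ 0) :
    (1 + √(1 - z)) ^ 2 * eulerBase z x =
      1 - (1 + √(1 - z)) ^ 2 / (1 - z * x) * (x - eulerSaddle z) ^ 2 := by
  have hsq : √(1 - z) ^ 2 = 1 - z := sq_sqrt (sub_nonneg.2 hz)
  unfold eulerBase eulerSaddle
  field_simp
  linear_combination x * hsq

lemma hasQuadraticPeak_eulerBase (hz : z < 1) :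
    HasQuadraticPeak (fun x ↦ (1 + √(1 - z)) ^ 2 * eulerBase z x) (eulerSaddle z)
      ((1 + √(1 - z)) ^ 2 / √(1 - z)) := by
  obtain ⟨hx₀, hx₁⟩ := eulerSaddle_mem_Ioo hz
  have hden : 1 - z * eulerSaddle z ≠ 0 := (one_sub_mul_pos hz ⟨hx₀.le, hx₁.le⟩).ne'
  have hcont : ContinuousAt (fun x ↦ (1 + √(1 - z)) ^ 2 / (1 - z * x)) (eulerSaddle z) := by
    fun_prop (disch := assumption)
  simpa only [one_sub_mul_eulerSaddle hz.le] using HasQuadraticPeak.of_eventuallyEq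
    (Filter.mem_of_superset (Icc_mem_nhds hx₀ hx₁) fun x hx ↦
      sq_mul_eulerBase hz.le (one_sub_mul_pos hz hx).ne') hcont

lemma continuousOn_eulerBase (hz : z < 1) : ContinuousOn (eulerBase z) (Icc 0 1) :=
  ContinuousOn.div (by fun_prop) (by fun_prop) fun _ hx ↦ (one_sub_mul_pos hz hx).ne'

lemma abs_sq_mul_eulerBase_lt_one (hz : z < 1) (hx : x ∈ Icc (0 : ℝ) 1) (hne : x ≠ eulerSaddle z) :
    |(1 + √(1 - z)) ^ 2 * eulerBase z x| < 1 := by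
  have hden := one_sub_mul_pos hz hx
  have hnonneg : 0 ≤ eulerBase z x :=
    div_nonneg (mul_nonneg hx.1 (sub_nonneg.2 hx.2)) hden.le
  rw [abs_of_nonneg (by positivity), sq_mul_eulerBase hz.le hden.ne', sub_lt_self_iff]
  exact mul_pos (div_pos (by positivity) hden) (sq_pos_of_ne_zero (sub_ne_zero.2 hne))

lemma continuousAt_eulerAmplitude (hz : z < 1) (hx : x ∈ Ioo (0 : ℝ) 1) :
    ContinuousAt (eulerAmplitude z a b c) x := by
  have hx₀ : (x : ℂ) ∈ Complex.slitPlane := Complex.ofReal_mem_slitPlane.2 hx.1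
  have hx₁ : ((1 - x : ℝ) : ℂ) ∈ Complex.slitPlane :=
    Complex.ofReal_mem_slitPlane.2 (sub_pos.2 hx.2)
  have hden : ((1 - z * x : ℝ) : ℂ) ∈ Complex.slitPlane :=
    Complex.ofReal_mem_slitPlane.2 (one_sub_mul_pos hz (Ioo_subset_Icc_self hx))
  unfold eulerAmplitude
  fun_prop (disch := assumption)

lemma intervalIntegrable_eulerAmplitude (hz : z < 1) (ha : 0 < a.re) (hca : 0 < (c - a).re) :
    IntervalIntegrable (eulerAmplitude z a b c) volume 0 1 := by
  have hcont : ContinuousOn (fun x : ℝ ↦ ((1 - z * x : ℝ) : ℂ) ^ (-b)) (uIcc 0 1) := by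
    rw [uIcc_of_le zero_le_one]
    exact ContinuousOn.cpow (by fun_prop) (by fun_prop) fun x hx ↦
      Complex.ofReal_mem_slitPlane.2 (one_sub_mul_pos hz hx)
  convert (Complex.betaIntegral_convergent ha hca).mul_continuousOn hcont using 1
  ext x
  simp [eulerAmplitude]

lemma eulerAmplitude_eulerSaddle (hz : z < 1) :
    eulerAmplitude z a b c (eulerSaddle z) =
      (√(1 - z) : ℂ) ^ (c - a - b - 1) / ((1 + √(1 - z) : ℝ) : ℂ) ^ (c - 2) := by
  have hs : 0 < √(1 - z) := sqrt_pos.2 (sub_pos.2 hz)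
  have hx₀ := one_sub_eulerSaddle z
  have hden := one_sub_mul_eulerSaddle hz.le
  unfold eulerAmplitude
  rw [hden, hx₀, eulerSaddle, one_div]
  generalize √(1 - z) = s at hs
  have hs' : 0 < 1 + s := by positivity
  have hsC : (s : ℂ) ≠ 0 := mod_cast hs.ne'
  have hsC' : ((1 + s : ℝ) : ℂ) ≠ 0 := mod_cast hs'.ne'
  have harg : ((1 + s : ℝ) : ℂ).arg ≠ π := by
    rw [Complex.arg_ofReal_of_nonneg hs'.le]
    exact pi_ne_zero.symm
  rw [Complex.ofReal_mul, Complex.mul_cpow_ofReal_nonneg hs.le (inv_nonneg.2 hs'.le),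
    Complex.ofReal_inv, Complex.inv_cpow _ _ harg, Complex.inv_cpow _ _ harg,
    show c - a - b - 1 = (c - a - 1) + -b by ring, Complex.cpow_add _ _ hsC,
    show c - 2 = (a - 1) + (c - a - 1) by ring, Complex.cpow_add _ _ hsC']
  field_simp

lemma tendsto_sqrt_smul_integral_eulerBase (hz : z < 1) (ha : 0 < a.re) (hca : 0 < (c - a).re) :
    Tendsto (fun m : ℕ ↦ √m • ∫ x in (0 : ℝ)..1,
        ((1 + √(1 - z)) ^ 2 * eulerBase z x) ^ m • eulerAmplitude z a b c x) atTop
      (nhds (√(π / ((1 + √(1 - z)) ^ 2 / √(1 - z))) • eulerAmplitude z a b c (eulerSaddle z))) := by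
  have hs : 0 < √(1 - z) := sqrt_pos.2 (sub_pos.2 hz)
  exact (hasQuadraticPeak_eulerBase hz).tendsto_sqrt_smul_intervalIntegral
    (div_pos (by positivity) hs) (eulerSaddle_mem_Ioo hz) ((continuousOn_eulerBase hz).const_mul _)
    (fun _ ↦ abs_sq_mul_eulerBase_lt_one hz) (intervalIntegrable_eulerAmplitude hz ha hca)
    (continuousAt_eulerAmplitude hz (eulerSaddle_mem_Ioo hz))

end EulerIntegral

theorem recessive_laplace_asymptotics (z : ℝ) (hz : z < 1) (hz0 : z ≠ 0)
    (a b c : ℂ) (ha : 0 < a.re) (hca : 0 < (c - a).re) :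
    let f : ℕ → ℂ := fun m =>
      ∫ x in (0 : ℝ)..1,
        (((x * (1 - x) / (1 - z * x) : ℝ) : ℂ)) ^ m *
          ((x : ℝ) : ℂ) ^ (a - 1) * (((1 - x : ℝ)) : ℂ) ^ (c - a - 1) *
          (((1 - z * x : ℝ)) : ℂ) ^ (-b)
    let s : ℝ := Real.sqrt (1 - z)
    let u₀ : ℂ := ((s : ℂ)) ^ (c - a - b - 1) / (((1 + s : ℝ) : ℂ)) ^ (c - 2)
    let φ'' : ℝ := 2 * (1 + s) ^ 2 / s
    Filter.Tendsto
      (fun m : ℕ => f m * (((1 + s : ℝ) : ℂ)) ^ (2 * m) * (Real.sqrt m : ℂ))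
      Filter.atTop
      (nhds ((Real.sqrt (2 * Real.pi) : ℂ) * u₀ / (Real.sqrt φ'' : ℂ))) := by
  intro f s u₀ φ''
  have hs : 0 < s := sqrt_pos.2 (sub_pos.2 hz)
  have hconst : √(π / ((1 + s) ^ 2 / s)) = √(2 * π) / √φ'' := by
    rw [← sqrt_div (by positivity)]
    congr 1
    simp only [φ'']
    field_simp
  have hlim : (√(2 * π) : ℂ) * u₀ / (√φ'' : ℂ) =
      √(π / ((1 + s) ^ 2 / s)) • eulerAmplitude z a b c (eulerSaddle z) := by
    rw [hconst, eulerAmplitude_eulerSaddle hz, Complex.real_smul, Complex.ofReal_div]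
    ring
  rw [hlim]
  refine (tendsto_sqrt_smul_integral_eulerBase hz ha hca).congr fun m ↦ ?_
  have hf : ∫ x in (0 : ℝ)..1, ((1 + s) ^ 2 * eulerBase z x) ^ m • eulerAmplitude z a b c x =
      f m * ((1 + s : ℝ) : ℂ) ^ (2 * m) := by
    rw [← intervalIntegral.integral_mul_const]
    refine intervalIntegral.integral_congr fun x _ ↦ ?_
    simp only [eulerBase, eulerAmplitude, Complex.real_smul, pow_mul, mul_pow, Complex.ofReal_mul,
      Complex.ofReal_pow]
    ring
  rw [hf, Complex.real_smul, mul_comm]
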